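/- arXiv:1703.02967 — 2 statements merged into one kernel-verified Lean document; each statement's English description precedes it below -/
import Mathlib

section
/- Let Γ be a subgroup of SL(2,ℝ) with −I ∈ Γ, let g, h ∈ SL(2,ℝ), and let T₁, T₂, u, s ∈ ℝ. Assume the right-coset equalities Γ·(g·A_{T₁}) = Γ·h, Γ·(h·A_{T₂}) = Γ·g, and Γ·(h·D_π) = Γ·(g·C_u·B_s). Then, with u' = s − u·e^{−T₂} and s' = u − s·e^{−T₁}, the right-coset equality Γ·((g·C_u·A_{−T₂})·A_{T₁+T₂}) = Γ·((g·C_u·A_{−T₂})·C_{u'}·B_{s'}) holds. (This is the algebraic core of the construction of the partner orbit for a periodic orbit with a 2-antiparallel encounter: the pseudo-orbit through g·C_u·A_{−T₂} returns to its own Poincaré section after time T₁+T₂ with local coordinates (u', s').) -/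
/-!
Write `x ~ y` for `Γ x = Γ y`, a relation preserved by right multiplication. Conjugation by `A_t`
rescales `C_u`, and conjugation by `D_π` exchanges the families `B` and `C` and inverts `A_t`.
Both sides of the claim then reduce to the same element up to sign. On the left,
`g C_u A_{T₁} ~ h D_π B_{-s} A_{T₁} ~ g A_{T₁} D_π B_{-s} A_{T₁} = g C_{s e^{-T₁}} D_π`.
On the right,
`g C_u A_{-T₂} C_{u'} B_{s'} = g A_{-T₂} C_s B_{s'} ~ h C_s B_{s'} ~ g C_u B_s D_π⁻¹ C_s B_{s'}`,
which equals `g C_{u - s'} D_π⁻¹ = -(g C_{s e^{-T₁}} D_π)`. The sign is absorbed by `-1 ∈ Γ`.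
-/

open scoped MatrixGroups

/-- `A_t = [[e^{t/2}, 0], [0, e^{-t/2}]]` as an element of `SL(2,ℝ)`. -/
noncomputable def Asl (t : ℝ) : SL(2, ℝ) :=
  ⟨!![Real.exp (t / 2), 0; 0, Real.exp (-t / 2)], by
    rw [Matrix.det_fin_two_of, ← Real.exp_add]
    ring_nf
    simp⟩

/-- `B_s = [[1, s], [0, 1]]` as an element of `SL(2,ℝ)`. -/
def Bsl (s : ℝ) : SL(2, ℝ) :=
  ⟨!![1, s; 0, 1], by rw [Matrix.det_fin_two_of]; ring⟩

/-- `C_u = [[1, 0], [u, 1]]` as an element of `SL(2,ℝ)`. -/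
def Csl (u : ℝ) : SL(2, ℝ) :=
  ⟨!![1, 0; u, 1], by rw [Matrix.det_fin_two_of]; ring⟩

/-- `D_π = [[0, -1], [1, 0]]` as an element of `SL(2,ℝ)`. -/
def Dsl : SL(2, ℝ) :=
  ⟨!![0, -1; 1, 0], by rw [Matrix.det_fin_two_of]; ring⟩

/-- The right coset `Γ·g = {γ·g : γ ∈ Γ}`. -/
def rightCoset (Γ : Subgroup (SL(2, ℝ))) (g : SL(2, ℝ)) : Set (SL(2, ℝ)) :=
  {x | ∃ γ ∈ Γ, x = γ * g}

lemma rightCoset_eq_iff_exists_mul (Γ : Subgroup (SL(2, ℝ))) (a b : SL(2, ℝ)) :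
    rightCoset Γ a = rightCoset Γ b ↔ ∃ γ ∈ Γ, a = γ * b := by
  constructor
  · intro hab
    have ha : a ∈ rightCoset Γ a := ⟨1, Γ.one_mem, (one_mul a).symm⟩
    rw [hab] at ha
    exact ha
  · rintro ⟨γ, hγ, rfl⟩
    ext x
    constructor
    · rintro ⟨δ, hδ, rfl⟩
      exact ⟨δ * γ, Γ.mul_mem hδ hγ, (mul_assoc _ _ _).symm⟩
    · rintro ⟨δ, hδ, rfl⟩
      exact ⟨δ * γ⁻¹, Γ.mul_mem hδ (Γ.inv_mem hγ), by group⟩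

lemma coe_Asl (t : ℝ) :
    (Asl t : Matrix (Fin 2) (Fin 2) ℝ) = !![Real.exp (t / 2), 0; 0, Real.exp (-t / 2)] := rfl

lemma coe_Bsl (s : ℝ) : (Bsl s : Matrix (Fin 2) (Fin 2) ℝ) = !![1, s; 0, 1] := rfl

lemma coe_Csl (u : ℝ) : (Csl u : Matrix (Fin 2) (Fin 2) ℝ) = !![1, 0; u, 1] := rfl

lemma coe_Dsl : (Dsl : Matrix (Fin 2) (Fin 2) ℝ) = !![0, -1; 1, 0] := rfl

lemma Asl_mul (a b : ℝ) : Asl a * Asl b = Asl (a + b) := by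
  ext i j
  fin_cases i <;> fin_cases j <;> simp [coe_Asl, ← Real.exp_add] <;> ring_nf

lemma Asl_zero : Asl 0 = 1 := by
  ext i j
  fin_cases i <;> fin_cases j <;> simp [coe_Asl]

/-- Both factors `A_t` cancel because `D_π` inverts `A_t`, and `B_{-s}` becomes a rescaled `C_s`. -/
lemma Asl_mul_Dsl_mul_Bsl_mul_Asl (t s : ℝ) :
    Asl t * Dsl * Bsl (-s) * Asl t = Csl (s * Real.exp (-t)) * Dsl := by
  have e1 : Real.exp (t / 2) * Real.exp (-t / 2) = 1 := by
    rw [← Real.exp_add]; ring_nf; simp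
  have e2 : Real.exp (-t) = Real.exp (-t / 2) * Real.exp (-t / 2) := by
    rw [← Real.exp_add]; ring_nf
  ext i j
  fin_cases i <;> fin_cases j <;> simp [coe_Asl, coe_Bsl, coe_Csl, coe_Dsl] <;> grind

lemma Bsl_mul_Bsl_neg (s : ℝ) : Bsl s * Bsl (-s) = 1 := by
  ext i j
  fin_cases i <;> fin_cases j <;> simp [coe_Bsl]

/-- Since `C_u A_{-t} = A_{-t} C_{u e^{-t}}`, the term `-u e^{-t}` of the last factor on the left
cancels `C_u`. -/
lemma Csl_mul_Asl_neg_mul_Csl (t u s : ℝ) :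
    Csl u * Asl (-t) * Csl (s - u * Real.exp (-t)) = Asl (-t) * Csl s := by
  have e1 : Real.exp (t / 2) * Real.exp (-t / 2) = 1 := by
    rw [← Real.exp_add]; ring_nf; simp
  have e2 : Real.exp (-t) = Real.exp (-t / 2) * Real.exp (-t / 2) := by
    rw [← Real.exp_add]; ring_nf
  ext i j
  fin_cases i <;> fin_cases j <;> simp [coe_Asl, coe_Csl] <;> grind

lemma Csl_mul_Dsl_mul_Bsl (u w : ℝ) :
    Csl u * Dsl * Bsl (u - w) = Csl w * Dsl := by
  ext i j
  fin_cases i <;> fin_cases j <;> simp [coe_Bsl, coe_Csl, coe_Dsl]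
  ring

/-- Conjugation by `D_π` turns `B_{-s}` into `C_s`; the sign comes from `D_π⁻¹ = -D_π`. -/
lemma Csl_eq (s : ℝ) : Csl s = -(Dsl * Bsl (-s) * Dsl) := by
  ext i j
  fin_cases i <;> fin_cases j <;> simp [coe_Bsl, coe_Csl, coe_Dsl]

/-- Algebraic core of the 2-antiparallel encounter partner-orbit construction: if
`Γ·(g A_{T₁}) = Γ·h`, `Γ·(h A_{T₂}) = Γ·g` and `Γ·(h D_π) = Γ·(g C_u B_s)`, then the
pseudo-orbit through `g C_u A_{-T₂}` returns to its own Poincaré section after time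
`T₁ + T₂` with coordinates `u' = s - u e^{-T₂}`, `s' = u - s e^{-T₁}`. -/
theorem stmt6 (Γ : Subgroup (SL(2, ℝ))) (hΓ : (-1 : SL(2, ℝ)) ∈ Γ)
    (g h : SL(2, ℝ)) (T₁ T₂ u s : ℝ)
    (h1 : rightCoset Γ (g * Asl T₁) = rightCoset Γ h)
    (h2 : rightCoset Γ (h * Asl T₂) = rightCoset Γ g)
    (h3 : rightCoset Γ (h * Dsl) = rightCoset Γ (g * Csl u * Bsl s)) :
    rightCoset Γ ((g * Csl u * Asl (-T₂)) * Asl (T₁ + T₂)) =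
      rightCoset Γ ((g * Csl u * Asl (-T₂)) *
        Csl (s - u * Real.exp (-T₂)) * Bsl (u - s * Real.exp (-T₁))) := by
  rw [rightCoset_eq_iff_exists_mul] at h1 h2 h3 ⊢
  obtain ⟨γ₁, m1, e1⟩ := h1
  obtain ⟨γ₂, m2, e2⟩ := h2
  obtain ⟨γ₃, m3, e3⟩ := h3
  have hgC : g * Csl u = γ₃⁻¹ * (h * Dsl * Bsl (-s)) := by
    rw [e3, mul_assoc γ₃, mul_assoc (g * Csl u), Bsl_mul_Bsl_neg]
    group
  have hh : h = γ₁⁻¹ * (g * Asl T₁) := by rw [e1]; group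
  have hgA : g * Asl (-T₂) = γ₂⁻¹ * h := by
    have hg : g = γ₂⁻¹ * (h * Asl T₂) := by rw [e2]; group
    rw [hg, mul_assoc, mul_assoc h, Asl_mul, add_neg_cancel, Asl_zero, mul_one]
  have hL : g * Csl u * Asl (-T₂) * Asl (T₁ + T₂) =
      γ₃⁻¹ * γ₁⁻¹ * (g * (Csl (s * Real.exp (-T₁)) * Dsl)) := by
    rw [mul_assoc (g * Csl u), Asl_mul, show -T₂ + (T₁ + T₂) = T₁ by ring, hgC,
      ← Asl_mul_Dsl_mul_Bsl_mul_Asl]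
    nth_rewrite 1 [hh]
    simp only [mul_assoc]
  have hR : g * Csl u * Asl (-T₂) * Csl (s - u * Real.exp (-T₂)) *
      Bsl (u - s * Real.exp (-T₁)) =
      -(γ₂⁻¹ * γ₃ * (g * (Csl (s * Real.exp (-T₁)) * Dsl))) := by
    have hD : h * Dsl * Bsl (-s) = γ₃ * (g * Csl u) := by rw [hgC]; group
    rw [← Csl_mul_Dsl_mul_Bsl u]
    calc _ = g * (Csl u * Asl (-T₂) * Csl (s - u * Real.exp (-T₂))) *
          Bsl (u - s * Real.exp (-T₁)) := by simp only [mul_assoc]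
      _ = γ₂⁻¹ * h * Csl s * Bsl (u - s * Real.exp (-T₁)) := by
          rw [Csl_mul_Asl_neg_mul_Csl, ← mul_assoc, hgA]
      _ = -(γ₂⁻¹ * (h * Dsl * Bsl (-s)) * Dsl * Bsl (u - s * Real.exp (-T₁))) := by
          rw [Csl_eq]; simp only [mul_neg, neg_mul, mul_assoc]
      _ = _ := by rw [hD]; simp only [mul_assoc]
  refine ⟨γ₃⁻¹ * γ₁⁻¹ * γ₃⁻¹ * γ₂ * -1, ?_, ?_⟩
  · exact Γ.mul_mem (Γ.mul_mem (Γ.mul_mem (Γ.mul_mem (Γ.inv_mem m3) (Γ.inv_mem m1))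
      (Γ.inv_mem m3)) m2) hΓ
  · rw [hL, hR, mul_assoc _ (-1), neg_one_mul, neg_neg]
    group
end

section
/- Let φ ∈ ℝ with 0 < φ < 1/3, and let T₁, T₂ ∈ ℝ satisfy e^{−T₁} < sin²(φ/2) and e^{−T₂} < sin²(φ/2). Set u = tan(φ/2) and s = −sin(φ/2)·cos(φ/2). Then (6/5)·sin(φ/2) + 2·(|s − u·e^{−T₂}| + |u − s·e^{−T₁}|) < 6·sin(φ/2). -/
/-!
Write `S = sin (φ/2)` and `c = cos (φ/2)`. Both absolute values have constant sign, so their sum is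
`S c + tan (φ/2) e^{-T₂} + tan (φ/2) + S c e^{-T₁}`. From `S < 1/6` and `c > 5/6` one gets
`tan (φ/2) < (6/5) S`, `S c ≤ S` and `e^{-Tᵢ} < 1/36`, so the sum is below
`(1 + 6/5) (1 + 1/36) S < (12/5) S`, which is the claim.
-/

/-- For `0 < φ < 1/3` and loop times with `e^{-T₁}, e^{-T₂} < sin²(φ/2)`, with
`u = tan(φ/2)`, `s = -sin(φ/2)cos(φ/2)`, the closeness parameter satisfies
`(6/5) sin(φ/2) + 2(|s - u e^{-T₂}| + |u - s e^{-T₁}|) < 6 sin(φ/2)`. -/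
theorem stmt12 (φ T₁ T₂ : ℝ) (hφ0 : 0 < φ) (hφ : φ < 1 / 3)
    (h1 : Real.exp (-T₁) < Real.sin (φ / 2) ^ 2)
    (h2 : Real.exp (-T₂) < Real.sin (φ / 2) ^ 2) :
    (6 / 5) * Real.sin (φ / 2) +
        2 * (|(-Real.sin (φ / 2) * Real.cos (φ / 2)) - Real.tan (φ / 2) * Real.exp (-T₂)| +
          |Real.tan (φ / 2) - (-Real.sin (φ / 2) * Real.cos (φ / 2)) * Real.exp (-T₁)|) <
      6 * Real.sin (φ / 2) := by
  have hS0 : 0 < Real.sin (φ / 2) :=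
    Real.sin_pos_of_pos_of_lt_pi (by linarith) (by linarith [Real.pi_gt_three])
  have hS : Real.sin (φ / 2) < 1 / 6 := by
    linarith [Real.sin_lt (show 0 < φ / 2 by linarith)]
  have hc : 5 / 6 < Real.cos (φ / 2) := by
    nlinarith [Real.one_sub_sq_div_two_le_cos (x := φ / 2)]
  have hc1 : Real.cos (φ / 2) ≤ 1 := Real.cos_le_one _
  have ht0 : 0 < Real.tan (φ / 2) := by
    rw [Real.tan_eq_sin_div_cos]
    exact div_pos hS0 (by linarith)
  have ht : Real.tan (φ / 2) < 6 / 5 * Real.sin (φ / 2) := by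
    rw [Real.tan_eq_sin_div_cos, div_lt_iff₀ (by linarith)]
    nlinarith
  have he1 := Real.exp_pos (-T₁)
  have he2 := Real.exp_pos (-T₂)
  generalize Real.exp (-T₁) = a at *
  generalize Real.exp (-T₂) = b at *
  generalize Real.sin (φ / 2) = S at *
  generalize Real.cos (φ / 2) = c at *
  generalize Real.tan (φ / 2) = t at *
  have hSS : S ^ 2 < 1 / 36 := by nlinarith
  have hSc0 : 0 < S * c := mul_pos hS0 (by linarith)
  have hSc : S * c ≤ S := by nlinarith
  have htb0 : 0 < t * b := mul_pos ht0 he2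
  have htb : t * b ≤ t * (1 / 36) := mul_le_mul_of_nonneg_left (by linarith) ht0.le
  have hSca0 : 0 < S * c * a := mul_pos hSc0 he1
  have hSca : S * c * a ≤ S * c * (1 / 36) := mul_le_mul_of_nonneg_left (by linarith) hSc0.le
  rw [abs_of_neg (by linarith), abs_of_pos (by linarith)]
  linarith
end
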